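/- For every t > 0 and every x = (x₁,x₂,a) ∈ G with x ≠ e, the derivative of the heat kernel along X₀ satisfies X₀ p_t(x) = p_t(x) · ( a/(r sinh r) − cosh r/(r sinh r) − a cosh r/sinh² r + 1/sinh² r + (r/(2t)) · (cosh r − a)/sinh r ), where r = r(x). -/

import Mathlib

open MeasureTheory Real Filter Set
open scoped ENNReal

noncomputable section

/-- The group `G = ℝ² ⋊ ℝ⁺`, realized as triples `(x₁, x₂, a)` (only `a > 0` is relevant). -/
abbrev G : Type := ℝ × ℝ × ℝ

/-- Group product `(x₁,x₂,a)·(x₁',x₂',a') = (x₁+a x₁', x₂+a x₂', a a')`. -/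
def gMul (x y : G) : G := (x.1 + x.2.2 * y.1, x.2.1 + x.2.2 * y.2.1, x.2.2 * y.2.2)

/-- Group inverse `(x₁,x₂,a)⁻¹ = (−x₁/a, −x₂/a, 1/a)`. -/
def gInv (x : G) : G := (-x.1 / x.2.2, -x.2.1 / x.2.2, 1 / x.2.2)

/-- The identity `e = (0,0,1)`. -/
def gE : G := (0, 0, 1)

/-- The right Haar measure `dρ = a⁻¹ dx₁ dx₂ da` (supported where `a > 0`). -/
def ρG : Measure G :=
  (volume : Measure G).withDensity fun x => ENNReal.ofReal (if 0 < x.2.2 then x.2.2⁻¹ else 0)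

/-- The modular function `δ(x₁,x₂,a) = a⁻²`. -/
def deltaG (x : G) : ℝ := (x.2.2 ^ 2)⁻¹

/-- `|x| = √(x₁² + x₂²)`. -/
def normG (x : G) : ℝ := Real.sqrt (x.1 ^ 2 + x.2.1 ^ 2)

/-- `cosh r(x) = (a + a⁻¹ + a⁻¹|x|²)/2`. -/
def coshArg (x : G) : ℝ := (x.2.2 + x.2.2⁻¹ + x.2.2⁻¹ * (x.1 ^ 2 + x.2.1 ^ 2)) / 2

/-- `r(x) ≥ 0` is determined by `cosh r(x) = coshArg x`; explicitly `r = arcosh (coshArg x)`. -/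
def rG (x : G) : ℝ := Real.log (coshArg x + Real.sqrt (coshArg x ^ 2 - 1))

/-- The left-invariant distance `d(x,y) = r(x⁻¹y)`. -/
def dG (x y : G) : ℝ := rG (gMul (gInv x) y)

/-- The heat kernel
`p_t(x) = (8π^{3/2})⁻¹ δ(x)^{1/2} (r(x)/sinh r(x)) t^{−3/2} exp(−r(x)²/(4t))`,
with `r/sinh r := 1` at `x = e`. -/
def heatK (t : ℝ) (x : G) : ℝ :=
  (8 * Real.pi ^ ((3 : ℝ)/2))⁻¹ * Real.sqrt (deltaG x) *
    (if rG x = 0 then 1 else rG x / Real.sinh (rG x)) *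
    t ^ (-(3 : ℝ)/2) * Real.exp (-(rG x ^ 2) / (4 * t))

/-- Convolution `f ∗ p_t(x) = ∫ f(xy⁻¹) p_t(y) dρ(y)`. -/
def convHeat (f : G → ℝ) (t : ℝ) (x : G) : ℝ := ∫ y, f (gMul x (gInv y)) * heatK t y ∂ρG

/-- The heat maximal operator `Mf(x) = sup_{t>0} |f ∗ p_t(x)|` (valued in `ℝ≥0∞`). -/
def maxHeat (f : G → ℝ) (x : G) : ℝ≥0∞ :=
  ⨆ (t : ℝ) (_ : 0 < t), ENNReal.ofReal |convHeat f t x|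

/-- Calderón–Zygmund sets. -/
def IsCZ (R : Set G) : Prop :=
  ∃ c : G, ∃ L r : ℝ, 0 < c.2.2 ∧ 0 < L ∧ 0 < r ∧
    R = Set.Icc (c.1 - L/2) (c.1 + L/2) ×ˢ
        (Set.Icc (c.2.1 - L/2) (c.2.1 + L/2) ×ˢ
         Set.Icc (c.2.2 * Real.exp (-r)) (c.2.2 * Real.exp r)) ∧
    (r < 1 → Real.exp 2 * c.2.2 * r ≤ L ∧ L < Real.exp 8 * c.2.2 * r) ∧
    (1 ≤ r → c.2.2 * Real.exp (2*r) ≤ L ∧ L < c.2.2 * Real.exp (8*r))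

/-- Atoms: `A ∈ L¹(ρ)` supported in a Calderón–Zygmund set `R`, with
`‖A‖_∞ ≤ ρ(R)⁻¹` and `∫ A dρ = 0`. -/
def IsAtomG (A : G → ℝ) : Prop :=
  Integrable A ρG ∧
  ∃ R : Set G, IsCZ R ∧ (∀ x ∉ R, A x = 0) ∧
    eLpNorm A ⊤ ρG ≤ (ρG R)⁻¹ ∧
    ∫ x, A x ∂ρG = 0

/-- `f = Σ_j lam_j A_j` with atoms `A_j`, `Σ_j |lam_j| < ∞`, converging in `L¹(ρ)`. -/
def IsH1Decomp (f : G → ℝ) (lam : ℕ → ℝ) (A : ℕ → G → ℝ) : Prop :=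
  (∀ j, IsAtomG (A j)) ∧ Summable (fun j => |lam j|) ∧
  Tendsto (fun N => eLpNorm (fun x => f x - ∑ j ∈ Finset.range N, lam j * A j x) 1 ρG)
    atTop (nhds 0)

/-- The Hardy space `H¹`. -/
def MemH1 (f : G → ℝ) : Prop :=
  Integrable f ρG ∧ ∃ lam A, IsH1Decomp f lam A

/-- `‖f‖_{H¹} = inf Σ_j |lam_j|` over all atomic decompositions. -/
def H1norm (f : G → ℝ) : ℝ :=
  sInf {s | ∃ lam A, IsH1Decomp f lam A ∧ s = ∑' j, |lam j|}

/-- The left-invariant vector field `X₀ = a ∂_a`. -/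
def X0 (f : G → ℝ) (x : G) : ℝ := x.2.2 * deriv (fun s => f (x.1, x.2.1, s)) x.2.2

/-- The left-invariant vector field `X₁ = a ∂_{x₁}`. -/
def X1 (f : G → ℝ) (x : G) : ℝ := x.2.2 * deriv (fun s => f (s, x.2.1, x.2.2)) x.1

/-- The left-invariant vector field `X₂ = a ∂_{x₂}`. -/
def X2 (f : G → ℝ) (x : G) : ℝ := x.2.2 * deriv (fun s => f (x.1, s, x.2.2)) x.2.1

/-- `‖∇p_t(x)‖`, the Euclidean norm of `(X₀p_t, X₁p_t, X₂p_t)` at `x`. -/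
def gradHeatNorm (t : ℝ) (x : G) : ℝ :=
  Real.sqrt (X0 (heatK t) x ^ 2 + X1 (heatK t) x ^ 2 + X2 (heatK t) x ^ 2)

/-- The Poisson kernel `q_t(x) = π⁻² δ(x)^{1/2} (r(x)/sinh r(x)) · t/(t²+r(x)²)²`. -/
def poissonK (t : ℝ) (x : G) : ℝ :=
  (Real.pi ^ 2)⁻¹ * Real.sqrt (deltaG x) *
    (if rG x = 0 then 1 else rG x / Real.sinh (rG x)) *
    (t / (t ^ 2 + rG x ^ 2) ^ 2)

/-- Convolution `f ∗ q_t(x) = ∫ f(xy⁻¹) q_t(y) dρ(y)`. -/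
def convPoisson (f : G → ℝ) (t : ℝ) (x : G) : ℝ := ∫ y, f (gMul x (gInv y)) * poissonK t y ∂ρG

/-- The Poisson maximal operator `M̃f(x) = sup_{t>0} |f ∗ q_t(x)|`. -/
def maxPoisson (f : G → ℝ) (x : G) : ℝ≥0∞ :=
  ⨆ (t : ℝ) (_ : 0 < t), ENNReal.ofReal |convPoisson f t x|

/-- `G_{r₁}(x) = sup_{z ∈ B(x,r₁/2)} sup_{t>0} ‖∇p_t(z)‖`. -/
def Gsup (r1 : ℝ) (x : G) : ℝ≥0∞ :=
  ⨆ (z : G) (_ : 0 < z.2.2 ∧ dG x z < r1 / 2) (t : ℝ) (_ : 0 < t),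
    ENNReal.ofReal (gradHeatNorm t z)

/-- `R₀ = [−1,1]×[−1,1]×[e⁻¹,e]`. -/
def R0set : Set G :=
  Set.Icc (-1 : ℝ) 1 ×ˢ (Set.Icc (-1 : ℝ) 1 ×ˢ Set.Icc (Real.exp (-1)) (Real.exp 1))

/-- `R_L = [L−1,L+1]×[−1,1]×[e⁻¹,e]`. -/
def RLset (L : ℝ) : Set G :=
  Set.Icc (L - 1) (L + 1) ×ˢ (Set.Icc (-1 : ℝ) 1 ×ˢ Set.Icc (Real.exp (-1)) (Real.exp 1))

/-- `f_L = χ_{R_L} − χ_{R₀}`. -/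
def fL (L : ℝ) : G → ℝ := fun x =>
  (RLset L).indicator (fun _ => (1 : ℝ)) x - R0set.indicator (fun _ => (1 : ℝ)) x

/-- The mean of `g` over `R` with respect to `ρ`. -/
def czMean (g : G → ℝ) (R : Set G) : ℝ := (∫ x in R, g x ∂ρG) / (ρG R).toReal

/-- `‖g‖_{BMO} = sup_R ρ(R)⁻¹ ∫_R |g − g_R| dρ` over Calderón–Zygmund sets `R`. -/
def czBMO (g : G → ℝ) : ℝ≥0∞ :=
  ⨆ (R : Set G) (_ : IsCZ R),
    (ρG R)⁻¹ * ∫⁻ x in R, ENNReal.ofReal |g x - czMean g R| ∂ρG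

/-- `‖h‖_{BMO(ℝ)} = sup_Q |Q|⁻¹ ∫_Q |h − h_Q|` over bounded intervals `Q ⊂ ℝ`. -/
def lineBMO (h : ℝ → ℝ) : ℝ≥0∞ :=
  ⨆ (a : ℝ) (b : ℝ) (_ : a < b),
    (ENNReal.ofReal (b - a))⁻¹ *
      ∫⁻ s in Set.Icc a b, ENNReal.ofReal |h s - (∫ u in Set.Icc a b, h u) / (b - a)|

/-- `2R₀ = [−2,2]×[−2,2]×[e⁻²,e²]`. -/
def twoR0set : Set G :=
  Set.Icc (-2 : ℝ) 2 ×ˢ (Set.Icc (-2 : ℝ) 2 ×ˢ Set.Icc (Real.exp (-2)) (Real.exp 2))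

/-- The set `{x₁ > 3, |x₂| < 1, e⁻¹ < a < e}`. -/
def domSpecial : Set G :=
  {x : G | 3 < x.1 ∧ |x.2.1| < 1 ∧ Real.exp (-1) < x.2.2 ∧ x.2.2 < Real.exp 1}

/-- The function equal to `1/(x₁ (log x₁)^{3/2})` on `{x₁ > 3, |x₂| < 1, e⁻¹ < a < e}`,
to `c₀` on `R₀`, and `0` elsewhere. -/
def fSpecial (c0 : ℝ) : G → ℝ := fun x =>
  domSpecial.indicator (fun y => (y.1 * Real.log y.1 ^ ((3 : ℝ)/2))⁻¹) x
    + R0set.indicator (fun _ => c0) x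

/-- The radial function is the inverse hyperbolic cosine of `coshArg`. -/
theorem rG_eq_arcosh (x : G) : rG x = Real.arcosh (coshArg x) := rfl

theorem one_lt_coshArg (x : G) (ha : 0 < x.2.2) (hx : x ≠ gE) : 1 < coshArg x := by
  obtain ⟨u, v, a⟩ := x
  simp only at ha
  have key : coshArg (u, v, a) - 1 = ((a - 1) ^ 2 + (u ^ 2 + v ^ 2)) / (2 * a) := by
    simp only [coshArg]
    field_simp
    ring
  have hpos : 0 < (a - 1) ^ 2 + (u ^ 2 + v ^ 2) := by
    by_contra h
    apply hx
    have h1 : a - 1 = 0 := by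
      apply pow_eq_zero_iff (two_ne_zero) |>.1
      nlinarith [sq_nonneg (a - 1), sq_nonneg u, sq_nonneg v]
    have h2 : u = 0 := by
      apply pow_eq_zero_iff (two_ne_zero) |>.1
      nlinarith [sq_nonneg (a - 1), sq_nonneg u, sq_nonneg v]
    have h3 : v = 0 := by
      apply pow_eq_zero_iff (two_ne_zero) |>.1
      nlinarith [sq_nonneg (a - 1), sq_nonneg u, sq_nonneg v]
    have h4 : a = 1 := by linarith
    simp [gE, h2, h3, h4]
  have : 0 < coshArg (u, v, a) - 1 := by
    rw [key]
    positivity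
  linarith

theorem X0_heatK (t : ℝ) (ht : 0 < t) (x : G) (ha : 0 < x.2.2) (hx : x ≠ gE) :
    X0 (heatK t) x = heatK t x *
      (x.2.2 / (rG x * Real.sinh (rG x)) - Real.cosh (rG x) / (rG x * Real.sinh (rG x))
        - x.2.2 * Real.cosh (rG x) / Real.sinh (rG x) ^ 2 + 1 / Real.sinh (rG x) ^ 2
        + rG x / (2 * t) * ((Real.cosh (rG x) - x.2.2) / Real.sinh (rG x))) := by
  have hC := one_lt_coshArg x ha hx
  obtain ⟨u, v, a⟩ := x
  simp only at ha
  have hcosh : Real.cosh (rG (u, v, a)) = coshArg (u, v, a) := Real.cosh_arcosh hC.le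
  have hsinh : Real.sinh (rG (u, v, a)) = √(coshArg (u, v, a) ^ 2 - 1) :=
    Real.sinh_arcosh hC.le
  have hrpos : 0 < rG (u, v, a) := Real.arcosh_pos hC
  have hspos : 0 < Real.sinh (rG (u, v, a)) := Real.sinh_pos_iff.2 hrpos
  have hcs := Real.cosh_sq (rG (u, v, a))
  -- derivative of `coshArg`
  have hdC : HasDerivAt (fun s : ℝ => coshArg (u, v, s))
      ((a - coshArg (u, v, a)) / a) a := by
    have h1 := (((hasDerivAt_id a).add (hasDerivAt_inv ha.ne')).add
      ((hasDerivAt_inv ha.ne').mul_const (u ^ 2 + v ^ 2))).div_const 2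
    refine h1.congr_deriv ?_
    simp only [coshArg]
    field_simp
    ring
  have hdr : HasDerivAt (fun s : ℝ => rG (u, v, s))
      ((a - coshArg (u, v, a)) / (a * Real.sinh (rG (u, v, a)))) a := by
    have h1 := (Real.hasDerivAt_arcosh (x := coshArg (u, v, a)) hC).comp a hdC
    refine h1.congr_deriv ?_
    rw [← hsinh]
    field_simp
  have hev : (fun s : ℝ => heatK t (u, v, s)) =ᶠ[nhds a] fun s =>
      (8 * Real.pi ^ ((3 : ℝ)/2))⁻¹ * s⁻¹ *
        (rG (u, v, s) / Real.sinh (rG (u, v, s))) *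
        t ^ (-(3 : ℝ)/2) * Real.exp (-(rG (u, v, s) ^ 2) / (4 * t)) := by
    filter_upwards [hdr.continuousAt.eventually_ne hrpos.ne', eventually_gt_nhds ha]
      with s h1 h2
    simp only [heatK, deltaG, if_neg h1]
    rw [Real.sqrt_inv, Real.sqrt_sq h2.le]
  have hd := (((((hasDerivAt_inv ha.ne').const_mul (8 * Real.pi ^ ((3 : ℝ)/2))⁻¹).mul
    (hdr.div hdr.sinh hspos.ne')).mul_const (t ^ (-(3 : ℝ)/2))).mul
    (((hdr.pow 2).neg.div_const (4 * t)).exp))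
  have hval := hev.eq_of_nhds
  have hderiv := (hd.congr_of_eventuallyEq hev).deriv
  simp only [X0]
  rw [hderiv, hval, ← hcosh]
  simp only [Pi.mul_apply, Pi.div_apply, Pi.pow_apply, Pi.neg_apply]
  generalize rG (u, v, a) = r at *
  generalize (8 * Real.pi ^ ((3 : ℝ)/2))⁻¹ = k at *
  generalize t ^ (-(3 : ℝ)/2) = w at *
  generalize Real.exp (-(r ^ 2) / (4 * t)) = E at *
  generalize Real.sinh r = S at *
  generalize Real.cosh r = C at *
  have hS : S ^ 2 = C ^ 2 - 1 := by linarith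
  field_simp
  linear_combination (-8 * k * w * E * r * t) * hS
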